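/- The Steiner triple system of order 25 on Z_5 × Z_5 obtained by developing the base blocks {(0,0),(0,1),(2,3)}, {(0,0),(1,2),(2,0)}, {(0,0),(1,0),(3,1)} modulo 5 independently in both coordinates is nonsequenceable; moreover, for every point x ∈ Z_5 × Z_5 there exists an almost parallel class of this system that does not contain x. -/

import Mathlib

/-- `B` is (the block set of) a partial Steiner triple system on the point set `X`:
every block has 3 points and every pair of distinct points lies in at most one block. -/
def isPSTS {X : Type*} [DecidableEq X] (B : Finset (Finset X)) : Prop :=
  (∀ b ∈ B, b.card = 3) ∧
  ∀ p q : X, p ≠ q → (B.filter (fun b => p ∈ b ∧ q ∈ b)).card ≤ 1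

/-- `B` is (the block set of) a Steiner triple system on the point set `X`:
every block has 3 points and every pair of distinct points lies in exactly one block. -/
def isSTS {X : Type*} [DecidableEq X] (B : Finset (Finset X)) : Prop :=
  (∀ b ∈ B, b.card = 3) ∧
  ∀ p q : X, p ≠ q → (B.filter (fun b => p ∈ b ∧ q ∈ b)).card = 1

/-- The finset `S` can be partitioned into blocks of `B`. -/
def blocksPartition {X : Type*} [DecidableEq X] (B : Finset (Finset X)) (S : Finset X) : Prop :=
  ∃ P : Finset (Finset X), P ⊆ B ∧
    (∀ b₁ ∈ P, ∀ b₂ ∈ P, b₁ ≠ b₂ → Disjoint b₁ b₂) ∧ P.biUnion id = S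

/-- `A` is an almost parallel class of `B`: a set of pairwise disjoint blocks
covering all points of `X` except exactly one. -/
def isAPC {X : Type*} [DecidableEq X] [Fintype X] (B A : Finset (Finset X)) : Prop :=
  A ⊆ B ∧ (∀ b₁ ∈ A, ∀ b₂ ∈ A, b₁ ≠ b₂ → Disjoint b₁ b₂) ∧
    ∃ y : X, A.biUnion id = Finset.univ.erase y

/-- `B` is sequenceable: there is a sequencing of the points (a bijection from
`Fin n` to `X`) such that no proper segment can be partitioned into blocks of `B`. -/
def sequenceable {X : Type*} [DecidableEq X] [Fintype X] (B : Finset (Finset X)) : Prop :=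
  ∃ f : Fin (Fintype.card X) ≃ X,
    ∀ i j : Fin (Fintype.card X), i ≤ j →
      ¬((i : ℕ) = 0 ∧ (j : ℕ) = Fintype.card X - 1) →
      ¬ blocksPartition B ((Finset.Icc i j).image f)

/-- The blocks obtained by developing the base blocks over `ZMod 5 × ZMod 5`. -/
def dev25 : Finset (Finset (ZMod 5 × ZMod 5)) :=
  Finset.univ.biUnion fun g : ZMod 5 × ZMod 5 =>
    ({{(0,0),(0,1),(2,3)}, {(0,0),(1,2),(2,0)}, {(0,0),(1,0),(3,1)}} :
        Finset (Finset (ZMod 5 × ZMod 5))).image (fun b => b.image (· + g))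

/-!
If the points other than `x` can be partitioned into blocks for every point `x`, then no sequencing
`x₁, …, xₙ` with `n ≥ 2` works, since the proper segment `x₂, …, xₙ` is all of `X` but `x₁`. A
development over a group is invariant under translation, and translations move any point to any
other, so a single almost parallel class has translates missing every given point. An explicit
class of eight blocks missing the origin therefore proves both claims.
-/

open Finset

section BlocksPartition

variable {X Y : Type*} [DecidableEq X] [DecidableEq Y] {B : Finset (Finset X)}

theorem blocksPartition_of_card_filter_mem {P : Finset (Finset X)} {S : Finset X} (hPB : P ⊆ B)
    (hP : ∀ p, (P.filter (p ∈ ·)).card = if p ∈ S then 1 else 0) : blocksPartition B S := by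
  refine ⟨P, hPB, fun b₁ hb₁ b₂ hb₂ hne => ?_, ?_⟩
  · refine disjoint_left.2 fun p hp₁ hp₂ => hne ?_
    have card_le_one_at : (P.filter (p ∈ ·)).card ≤ 1 := by rw [hP]; split <;> simp
    exact card_le_one.1 card_le_one_at b₁ (mem_filter.2 ⟨hb₁, hp₁⟩) b₂ (mem_filter.2 ⟨hb₂, hp₂⟩)
  · ext p
    calc p ∈ P.biUnion id ↔ (P.filter (p ∈ ·)).Nonempty := by
          simp only [mem_biUnion, id, filter_nonempty_iff]
      _ ↔ 0 < (P.filter (p ∈ ·)).card := card_pos.symm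
      _ ↔ p ∈ S := by rw [hP]; split <;> simp_all

theorem blocksPartition.image {C : Finset (Finset Y)} {S : Finset X} {φ : X → Y}
    (hS : blocksPartition B S) (hφ : Function.Injective φ) (hBC : ∀ b ∈ B, b.image φ ∈ C) :
    blocksPartition C (S.image φ) := by
  obtain ⟨P, hPB, hdisj, rfl⟩ := hS
  refine ⟨P.image (Finset.image φ), image_subset_iff.2 fun b hb => hBC b (hPB hb), ?_, ?_⟩
  · simp only [forall_mem_image]
    intro b₁ hb₁ b₂ hb₂ hne
    exact (disjoint_image hφ).2 (hdisj b₁ hb₁ b₂ hb₂ (ne_of_apply_ne _ hne))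
  · simp only [image_biUnion, biUnion_image, id]

variable [Fintype X]

theorem exists_isAPC_notMem_iff {x : X} :
    (∃ A, isAPC B A ∧ x ∉ A.biUnion id) ↔ blocksPartition B (univ.erase x) := by
  constructor
  · rintro ⟨A, ⟨hAB, hdisj, y, hy⟩, hx⟩
    obtain rfl : x = y := by simpa [hy] using hx
    exact ⟨A, hAB, hdisj, hy⟩
  · rintro ⟨A, hAB, hdisj, hA⟩
    exact ⟨A, ⟨hAB, hdisj, x, hA⟩, hA ▸ notMem_erase x univ⟩

theorem not_sequenceable_of_forall_blocksPartition_univ_erase [Nontrivial X]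
    (h : ∀ x, blocksPartition B (univ.erase x)) : ¬ sequenceable B := by
  rintro ⟨f, hf⟩
  have hcard : 1 < Fintype.card X := Fintype.one_lt_card
  let first : Fin (Fintype.card X) := ⟨0, by lia⟩
  let second : Fin (Fintype.card X) := ⟨1, hcard⟩
  let last : Fin (Fintype.card X) := ⟨Fintype.card X - 1, by lia⟩
  have segment_eq : Icc second last = univ.erase first := by
    ext k
    simp only [mem_Icc, mem_erase, mem_univ, and_true, ne_eq, Fin.le_def, Fin.ext_iff,
      first, second, last]
    lia
  have image_segment_eq : (Icc second last).image f = univ.erase (f first) := by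
    rw [segment_eq, image_erase f.injective, image_univ_equiv]
  have second_le_last : second ≤ last := Nat.le_sub_one_of_lt hcard
  exact hf second last second_le_last (fun hwhole => one_ne_zero hwhole.1)
    (image_segment_eq ▸ h (f first))

end BlocksPartition

section Development

variable {G : Type*} [DecidableEq G] [Fintype G]

/-- The blocks obtained by developing the base blocks `D` over `G`, that is, all their right
translates. -/
def development [Add G] (D : Finset (Finset G)) : Finset (Finset G) :=
  univ.biUnion fun g => D.image fun b => b.image (· + g)

theorem mem_development [Add G] {D : Finset (Finset G)} {b : Finset G} :
    b ∈ development D ↔ ∃ g, ∃ d ∈ D, d.image (· + g) = b := by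
  simp only [development, mem_biUnion, mem_univ, true_and, mem_image]

theorem image_add_right_mem_development [AddSemigroup G] {D : Finset (Finset G)} {b : Finset G}
    (hb : b ∈ development D) (g : G) : b.image (· + g) ∈ development D := by
  obtain ⟨h, d, hd, rfl⟩ := mem_development.1 hb
  refine mem_development.2 ⟨h + g, d, hd, ?_⟩
  simp only [image_image, Function.comp_def, add_assoc]

theorem blocksPartition_development_univ_erase [AddGroup G] {D : Finset (Finset G)} {x : G}
    (hx : blocksPartition (development D) (univ.erase x)) (y : G) :
    blocksPartition (development D) (univ.erase y) := by
  have image_erase_eq : (univ.erase x).image (· + (-x + y)) = univ.erase y := by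
    rw [image_erase (add_left_injective _), add_neg_cancel_left,
      image_univ_of_surjective (add_right_surjective _)]
  exact image_erase_eq ▸ hx.image (add_left_injective _)
    fun _ hb => image_add_right_mem_development hb _

end Development

/-- The base blocks whose development over `ZMod 5 × ZMod 5` is `dev25`. -/
def baseBlocks25 : Finset (Finset (ZMod 5 × ZMod 5)) :=
  {{(0, 0), (0, 1), (2, 3)}, {(0, 0), (1, 2), (2, 0)}, {(0, 0), (1, 0), (3, 1)}}

theorem dev25_eq_development : dev25 = development baseBlocks25 := rfl

/-- An almost parallel class of `dev25` missing `(0, 0)`. -/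
def almostParallelClass25 : Finset (Finset (ZMod 5 × ZMod 5)) :=
  {{(0, 1), (0, 2), (2, 4)}, {(0, 3), (3, 3), (4, 0)}, {(0, 4), (3, 1), (3, 2)},
    {(1, 0), (2, 2), (3, 0)}, {(1, 1), (1, 2), (3, 4)}, {(1, 3), (2, 3), (4, 4)},
    {(1, 4), (4, 1), (4, 2)}, {(2, 0), (2, 1), (4, 3)}}

theorem almostParallelClass25_subset_dev25 : almostParallelClass25 ⊆ dev25 := by
  decide +kernel

theorem card_filter_mem_almostParallelClass25 : ∀ p,
    (almostParallelClass25.filter (p ∈ ·)).card = if p ∈ univ.erase (0, 0) then 1 else 0 := by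
  decide +kernel

theorem blocksPartition_dev25_univ_erase (x : ZMod 5 × ZMod 5) :
    blocksPartition dev25 (univ.erase x) := by
  have partition_erase_zero : blocksPartition dev25 (univ.erase (0, 0)) :=
    blocksPartition_of_card_filter_mem almostParallelClass25_subset_dev25
      card_filter_mem_almostParallelClass25
  rw [dev25_eq_development] at partition_erase_zero ⊢
  exact blocksPartition_development_univ_erase partition_erase_zero x

theorem stmt8 :
    ¬ sequenceable dev25 ∧
    (∀ x : ZMod 5 × ZMod 5, ∃ A : Finset (Finset (ZMod 5 × ZMod 5)),
      isAPC dev25 A ∧ x ∉ A.biUnion id) := by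
  have : Fact (1 < 5) := ⟨by norm_num⟩
  exact ⟨not_sequenceable_of_forall_blocksPartition_univ_erase blocksPartition_dev25_univ_erase,
    fun x => exists_isAPC_notMem_iff.2 (blocksPartition_dev25_univ_erase x)⟩
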